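/- Let ℂ∞ denote the Riemann sphere (OnePoint ℂ). Let U ⊆ ℂ∞ be a simply connected open set whose boundary X = ∂U contains at least two points and is connected, and let V ≠ U be a connected component of ℂ∞ ∖ X such that ∂V has nonempty interior relative to X. Assume that X is irreducible about some finite subset of X, and assume that every indecomposable subcontinuum of X with nonempty interior relative to X is equal to X. Then X is an indecomposable continuum. -/

import Mathlib

open Set Topology

/-- The Riemann sphere, as the one-point compactification of `ℂ`. -/
abbrev RiemannSphere : Type := OnePoint ℂ

/-- A subcontinuum (of an ambient space) is a nonempty compact connected set;
nonemptiness is part of `IsConnected`. -/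
def IsSubcontinuum {α : Type*} [TopologicalSpace α] (K : Set α) : Prop :=
  IsCompact K ∧ IsConnected K

/-- A set is indecomposable if it is not the union of two of its proper subcontinua. -/
def IsIndecomposableSet {α : Type*} [TopologicalSpace α] (K : Set α) : Prop :=
  ∀ K₁ K₂ : Set α, IsSubcontinuum K₁ → K₁ ⊆ K → IsSubcontinuum K₂ → K₂ ⊆ K →
    K₁ ∪ K₂ = K → K₁ = K ∨ K₂ = K

/-- The interior of `Z` relative to `X`, i.e. the interior of the corresponding subset
of the subspace `X`. -/
def relInterior {α : Type*} [TopologicalSpace α] (X Z : Set α) : Set X :=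
  interior ((↑) ⁻¹' Z : Set X)

/-!
If `X` were decomposable, then no subcontinuum with interior in `X` would be indecomposable. Let
`W` be a nonempty relatively open subset of `X` contained in `∂U ∩ ∂V`. Decomposing a minimal
subcontinuum containing `W` and attaching to it finitely many components of the complement of `W`,
which reach all points of the finite set about which `X` is irreducible, gives `X = P ∪ Q` with
subcontinua `P`, `Q` that both miss part of `W`. Decomposing `P` once more, relative to `W \ Q`,
gives a second such pair `P' ⊆ P`, `Q ⊆ Q'`. If `Q` is chosen to contain as many of the finitely
many points as possible, then irreducibility forces `P ∩ Q'` to be connected.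

Both `U` and `V` accumulate at every point of `W`, so they lie in one component of the complement
of `P`, and in one component of the complement of `Q'`. By Janiszewski's theorem they lie in one
component of the complement of `P ∪ Q' = X`, a contradiction.

Janiszewski's theorem follows from Borsuk's criterion: a compact `K ⊆ ℂ` does not separate `u ∉ K`
from `∞` if and only if `z ↦ z - u` has a continuous logarithm on `K`. Logarithms on two closed
sets with connected intersection differ there by a constant, so they can be glued.
-/

section Continua

variable {α : Type*} [TopologicalSpace α]

/-- `X` is irreducible about `A ⊆ X`: no proper subcontinuum of `X` contains `A`. -/
def IsIrreducibleAbout (X A : Set α) : Prop :=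
  A ⊆ X ∧ ∀ K : Set α, IsSubcontinuum K → K ⊆ X → A ⊆ K → K = X

/-- `X` is the union of two overlapping subcontinua `P` and `Q`, neither of which contains the
set `W`. In the applications `W ⊆ X`, so that `P` and `Q` are proper. -/
structure IsDecomposition (X W P Q : Set α) : Prop where
  left : IsSubcontinuum P
  right : IsSubcontinuum Q
  union_eq : P ∪ Q = X
  inter_nonempty : (P ∩ Q).Nonempty
  not_subset_left : ¬ W ⊆ P
  not_subset_right : ¬ W ⊆ Q

lemma relInterior_nonempty_iff {X Z : Set α} :
    (relInterior X Z).Nonempty ↔ ∃ O, IsOpen O ∧ (X ∩ O).Nonempty ∧ X ∩ O ⊆ Z := by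
  constructor
  · rintro ⟨x, hx⟩
    obtain ⟨_, htZ, ⟨O, hO, rfl⟩, hxO⟩ := mem_interior.1 hx
    exact ⟨O, hO, ⟨x, x.2, hxO⟩, fun y hy => @htZ ⟨y, hy.1⟩ hy.2⟩
  · rintro ⟨O, hO, ⟨x, hxX, hxO⟩, hOZ⟩
    exact ⟨⟨x, hxX⟩, mem_interior.2 ⟨Subtype.val ⁻¹' O, fun y hy => hOZ ⟨y.2, hy⟩,
      hO.preimage continuous_subtype_val, hxO⟩⟩

lemma IsSubcontinuum.union {K L : Set α} (hK : IsSubcontinuum K) (hL : IsSubcontinuum L)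
    (h : (K ∩ L).Nonempty) : IsSubcontinuum (K ∪ L) :=
  ⟨hK.1.union hL.1, IsConnected.union h hK.2 hL.2⟩

namespace IsDecomposition

variable {X W P Q : Set α}

lemma symm (h : IsDecomposition X W P Q) : IsDecomposition X W Q P :=
  ⟨h.right, h.left, union_comm P Q ▸ h.union_eq, inter_comm P Q ▸ h.inter_nonempty,
    h.not_subset_right, h.not_subset_left⟩

lemma isSubcontinuum (h : IsDecomposition X W P Q) : IsSubcontinuum X :=
  h.union_eq ▸ h.left.union h.right h.inter_nonempty

lemma left_subset (h : IsDecomposition X W P Q) : P ⊆ X := h.union_eq ▸ subset_union_left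

lemma right_subset (h : IsDecomposition X W P Q) : Q ⊆ X := h.union_eq ▸ subset_union_right

lemma attach_left (h : IsDecomposition X W P Q) {N : Set α} (hN : IsSubcontinuum N)
    (hPN : (P ∩ N).Nonempty) (hNW : Disjoint W N) : IsDecomposition (X ∪ N) W (P ∪ N) Q where
  left := h.left.union hN hPN
  right := h.right
  union_eq := by rw [union_right_comm, h.union_eq]
  inter_nonempty := h.inter_nonempty.mono (inter_subset_inter_left _ subset_union_left)
  not_subset_left hW := h.not_subset_left (hNW.subset_left_of_subset_union hW)
  not_subset_right := h.not_subset_right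

end IsDecomposition

lemma isSubcontinuum_connectedComponentIn {L : Set α} (hL : IsCompact L) {b : α} (hb : b ∈ L) :
    IsSubcontinuum (connectedComponentIn L b) := by
  have : CompactSpace L := isCompact_iff_compactSpace.1 hL
  refine ⟨?_, isConnected_connectedComponentIn_iff.2 hb⟩
  rw [connectedComponentIn_eq_image hb]
  exact isClosed_connectedComponent.isCompact.image continuous_subtype_val

lemma isPreconnected_union_left_of_disjoint {Q E F : Set α} (hQ : IsClosed Q) (hE : IsClosed E)
    (hF : IsClosed F) (hEF : Disjoint E F) (hQc : IsPreconnected Q)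
    (h : IsPreconnected (Q ∪ (E ∪ F))) : IsPreconnected (Q ∪ E) := by
  refine (isPreconnected_iff_subset_of_fully_disjoint_closed (hQ.union hE)).2 ?_
  intro u v hu hv huv hdisj
  wlog hQu : Q ⊆ u generalizing u v
  · refine (this v u hv hu (union_comm u v ▸ huv) hdisj.symm ?_).symm
    exact ((isPreconnected_iff_subset_of_fully_disjoint_closed hQ).1 hQc u v hu hv
      (subset_union_left.trans huv) hdisj).resolve_left hQu
  have hcover : Q ∪ (E ∪ F) ⊆ (u ∪ F) ∪ (E ∩ v) := by
    rintro x (hx | hx | hx)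
    · exact Or.inl (Or.inl (hQu hx))
    · exact (huv (Or.inr hx)).imp Or.inl fun hxv => ⟨hx, hxv⟩
    · exact Or.inl (Or.inr hx)
  have hdisj' : Disjoint (u ∪ F) (E ∩ v) :=
    disjoint_union_left.2
      ⟨hdisj.mono_right inter_subset_right, hEF.symm.mono_right inter_subset_left⟩
  refine ((isPreconnected_iff_subset_of_fully_disjoint_closed
    (hQ.union (hE.union hF))).1 h _ _ (hu.union hF) (hE.inter hv) hcover hdisj').imp
    (fun hsub => union_subset hQu ?_) fun hsub => ?_
  · exact hEF.subset_left_of_subset_union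
      ((subset_union_left.trans subset_union_right).trans hsub)
  · exact (union_subset_union_right Q subset_union_left).trans (hsub.trans inter_subset_right)

variable [T2Space α]

lemma IsSubcontinuum.sInter {c : Set (Set α)} (hne : c.Nonempty) (hdir : DirectedOn (· ⊇ ·) c)
    (hc : ∀ K ∈ c, IsSubcontinuum K) : IsSubcontinuum (⋂₀ c) := by
  have hclosed (K) (hK : K ∈ c) : IsClosed K := (hc K hK).1.isClosed
  have hcompact : IsCompact (⋂₀ c) :=
    hne.elim fun K hK =>
      (hc K hK).1.of_isClosed_subset (isClosed_sInter hclosed) (sInter_subset_of_mem hK)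
  have : Nonempty c := hne.to_subtype
  refine ⟨hcompact, IsCompact.nonempty_sInter_of_directed_nonempty_isCompact_isClosed hdir
    (fun K hK => (hc K hK).2.1) (fun K hK => (hc K hK).1) hclosed,
    (isPreconnected_iff_subset_of_fully_disjoint_closed hcompact.isClosed).2
      fun u v hu hv huv hdisj => ?_⟩
  obtain ⟨O₁, O₂, hO₁, hO₂, hu₁, hv₂, hO₁₂⟩ := SeparatedNhds.of_isCompact_isCompact
    (hcompact.inter_right hu) (hcompact.inter_right hv)
    (hdisj.mono inter_subset_right inter_subset_right)
  have hcover : ⋂₀ c ⊆ O₁ ∪ O₂ := fun x hx =>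
    (huv hx).imp (fun hxu => hu₁ ⟨hx, hxu⟩) fun hxv => hv₂ ⟨hx, hxv⟩
  obtain ⟨⟨K, hK⟩, hKO⟩ := exists_subset_nhds_of_isCompact (DirectedOn.directed_val hdir)
    (fun i => (hc i i.2).1) (U := O₁ ∪ O₂)
    (fun x hx => (hO₁.union hO₂).mem_nhds (hcover (by rwa [sInter_eq_iInter])))
  have hsub : ⋂₀ c ⊆ K := sInter_subset_of_mem hK
  refine ((hc K hK).2.2.subset_or_subset hO₁ hO₂ hO₁₂ hKO).imp (fun h x hx => ?_) fun h x hx => ?_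
  · exact (huv hx).resolve_right fun hxv => hO₁₂.notMem_of_mem_left (h (hsub hx)) (hv₂ ⟨hx, hxv⟩)
  · exact (huv hx).resolve_left fun hxu => hO₁₂.notMem_of_mem_left (hu₁ ⟨hx, hxu⟩) (h (hsub hx))

lemma IsSubcontinuum.exists_minimal {P : Set α} (hP : IsSubcontinuum P) {S : Set α} (hS : S ⊆ P) :
    ∃ K ⊆ P, Minimal (fun K => IsSubcontinuum K ∧ S ⊆ K) K := by
  refine zorn_superset_nonempty {K | IsSubcontinuum K ∧ S ⊆ K} (fun c hcS hc hne => ?_) P ⟨hP, hS⟩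
  have hdir : DirectedOn (· ⊇ ·) c := fun K hK L hL => (hc.total hK hL).elim
    (fun h => ⟨K, hK, Subset.rfl, h⟩) fun h => ⟨L, hL, h, Subset.rfl⟩
  exact ⟨⋂₀ c, ⟨.sInter hne hdir fun K hK => (hcS hK).1, subset_sInter fun K hK => (hcS hK).2⟩,
    fun _ => sInter_subset_of_mem⟩

lemma IsSubcontinuum.exists_isDecomposition {P W : Set α} (hP : IsSubcontinuum P) (hW : W ⊆ P)
    (hdec : ∀ K ⊆ P, IsSubcontinuum K → W ⊆ K → ¬ IsIndecomposableSet K) :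
    ∃ K ⊆ P, W ⊆ K ∧ ∃ K₁ K₂, IsDecomposition K W K₁ K₂ := by
  obtain ⟨K, hKP, ⟨hK, hWK⟩, hmin⟩ := hP.exists_minimal hW
  have hdecK := hdec K hKP hK hWK
  unfold IsIndecomposableSet at hdecK
  push Not at hdecK
  obtain ⟨K₁, K₂, h₁, hK₁, h₂, hK₂, hunion, hne₁, hne₂⟩ := hdecK
  have hmeet : (K ∩ (K₁ ∩ K₂)).Nonempty :=
    isPreconnected_closed_iff.1 hK.2.2 K₁ K₂ h₁.1.isClosed h₂.1.isClosed hunion.ge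
      (by rw [inter_eq_right.2 hK₁]; exact h₁.2.1) (by rw [inter_eq_right.2 hK₂]; exact h₂.2.1)
  exact ⟨K, hKP, hWK, K₁, K₂, h₁, h₂, hunion, hmeet.right,
    fun h => hne₁ (hK₁.antisymm (hmin ⟨h₁, h⟩ hK₁)),
    fun h => hne₂ (hK₂.antisymm (hmin ⟨h₂, h⟩ hK₂))⟩

-- In a compact space components are quasi-components, i.e. intersections of clopen sets.
lemma exists_isClosed_partition_of_disjoint_connectedComponentIn {L Z : Set α} (hL : IsCompact L)
    {b : α} (hb : b ∈ L) (hZ : IsClosed Z) (hdisj : Disjoint (connectedComponentIn L b) Z) :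
    ∃ D E, IsClosed D ∧ IsClosed E ∧ D ∪ E = L ∧ Disjoint D E ∧ b ∈ D ∧ Disjoint D Z := by
  have : CompactSpace L := isCompact_iff_compactSpace.1 hL
  let ι := {s : Set L // IsClopen s ∧ (⟨b, hb⟩ : L) ∈ s}
  have : Nonempty ι := ⟨⟨univ, isClopen_univ, mem_univ _⟩⟩
  have hdir : Directed (· ⊇ ·) (fun s : ι => (s : Set L)) := fun s t =>
    ⟨⟨s ∩ t, s.2.1.inter t.2.1, s.2.2, t.2.2⟩, inter_subset_left, inter_subset_right⟩
  rw [connectedComponentIn_eq_image hb, connectedComponent_eq_iInter_isClopen] at hdisj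
  obtain ⟨⟨D, hD, hbD⟩, hDZ⟩ := exists_subset_nhds_of_isCompact hdir
    (fun s => s.2.1.isClosed.isCompact) (U := (Subtype.val ⁻¹' Z)ᶜ) fun x hx =>
      (hZ.preimage continuous_subtype_val).isOpen_compl.mem_nhds
        (hdisj.notMem_of_mem_left (mem_image_of_mem _ hx))
  have hval {s : Set L} (hs : IsClosed s) : IsClosed (Subtype.val '' s : Set α) :=
    (hs.isCompact.image continuous_subtype_val).isClosed
  refine ⟨Subtype.val '' D, Subtype.val '' Dᶜ, hval hD.isClosed, hval hD.compl.isClosed,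
    by rw [← image_union, union_compl_self, image_univ, Subtype.range_val],
    (disjoint_image_iff Subtype.val_injective).2 disjoint_compl_right, ⟨_, hbD, rfl⟩, ?_⟩
  rw [disjoint_left]
  rintro _ ⟨x, hx, rfl⟩
  exact hDZ hx

-- Boundary bumping: a clopen piece of `P \ O` that misses `K ⊇ P ∩ O` would be clopen in `P`.
lemma IsSubcontinuum.connectedComponentIn_diff_inter_nonempty {P K O : Set α}
    (hP : IsSubcontinuum P) (hO : IsOpen O) (hK : IsClosed K) (hKP : (P ∩ K).Nonempty)
    (hOK : P ∩ O ⊆ K) {b : α} (hb : b ∈ P \ O) :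
    (connectedComponentIn (P \ O) b ∩ K).Nonempty := by
  by_contra hempty
  obtain ⟨D, E, hD, hE, hDE, hdisj, hbD, hDK⟩ :=
    exists_isClosed_partition_of_disjoint_connectedComponentIn (hP.1.diff hO) hb hK
      (disjoint_iff_inter_eq_empty.2 (not_nonempty_iff_eq_empty.1 hempty))
  have hcover : P ⊆ D ∪ (E ∪ K) := by
    rw [← union_assoc, hDE]
    exact fun x hx => (em (x ∈ O)).symm.imp (fun h => ⟨hx, h⟩) fun h => hOK ⟨hx, h⟩
  obtain ⟨x, -, hxD, hxEK⟩ := isPreconnected_closed_iff.1 hP.2.2 D (E ∪ K) hD (hE.union hK) hcover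
    ⟨b, hb.1, hbD⟩ (hKP.mono (inter_subset_inter_right _ subset_union_right))
  exact hxEK.elim (hdisj.notMem_of_mem_left hxD) (hDK.notMem_of_mem_left hxD)

lemma IsDecomposition.exists_insert {P O Y K₁ K₂ : Set α} (h : IsDecomposition Y (P ∩ O) K₁ K₂)
    (hP : IsSubcontinuum P) (hO : IsOpen O) (hYP : Y ⊆ P) (hOY : P ∩ O ⊆ Y) {b : α} (hb : b ∈ P) :
    ∃ Y' ⊆ P, insert b Y ⊆ Y' ∧ ∃ L₁ L₂, IsDecomposition Y' (P ∩ O) L₁ L₂ := by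
  by_cases hbO : b ∈ O
  · exact ⟨Y, hYP, insert_subset (hOY ⟨hb, hbO⟩) Subset.rfl, K₁, K₂, h⟩
  set N := connectedComponentIn (P \ O) b
  have hNPO : N ⊆ P \ O := connectedComponentIn_subset _ _
  have hNO : Disjoint (P ∩ O) N :=
    disjoint_left.2 fun x hx hxN => (hNPO hxN).2 hx.2
  have hN : IsSubcontinuum N := isSubcontinuum_connectedComponentIn (hP.1.diff hO) ⟨hb, hbO⟩
  have hY' : insert b Y ⊆ Y ∪ N :=
    insert_subset (Or.inr (mem_connectedComponentIn ⟨hb, hbO⟩)) subset_union_left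
  refine ⟨Y ∪ N, union_subset hYP (hNPO.trans sdiff_subset), hY', ?_⟩
  obtain ⟨x, hxN, hxY⟩ := hP.connectedComponentIn_diff_inter_nonempty hO
    h.isSubcontinuum.1.isClosed
    (h.isSubcontinuum.2.1.mono (subset_inter hYP Subset.rfl)) hOY ⟨hb, hbO⟩
  rw [← h.union_eq] at hxY
  rcases hxY with hx | hx
  · exact ⟨_, _, h.attach_left hN ⟨x, hx, hxN⟩ hNO⟩
  · exact ⟨_, _, h.symm.attach_left hN ⟨x, hx, hxN⟩ hNO⟩

lemma IsSubcontinuum.exists_isDecomposition_of_finite {P O B : Set α} (hP : IsSubcontinuum P)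
    (hO : IsOpen O) (hB : B.Finite) (hBP : B ⊆ P)
    (hdec : ∀ K ⊆ P, IsSubcontinuum K → P ∩ O ⊆ K → ¬ IsIndecomposableSet K) :
    ∃ Y ⊆ P, P ∩ O ⊆ Y ∧ B ⊆ Y ∧ ∃ K₁ K₂, IsDecomposition Y (P ∩ O) K₁ K₂ := by
  induction B, hB using Set.Finite.induction_on with
  | empty =>
    obtain ⟨Y, hYP, hOY, hY⟩ := hP.exists_isDecomposition inter_subset_left hdec
    exact ⟨Y, hYP, hOY, empty_subset _, hY⟩
  | insert _ _ ih =>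
    obtain ⟨hb, hBP⟩ := insert_subset_iff.1 hBP
    obtain ⟨Y, hYP, hOY, hBY, K₁, K₂, hY⟩ := ih hBP
    obtain ⟨Y', hYP', hYY', hY'⟩ := hY.exists_insert hP hO hYP hOY hb
    obtain ⟨hbY', hYY'⟩ := insert_subset_iff.1 hYY'
    exact ⟨Y', hYP', hOY.trans hYY', insert_subset hbY' (hBY.trans hYY'), hY'⟩

lemma IsDecomposition.exists_refinement {X A O P Q : Set α} (h : IsDecomposition X (X ∩ O) P Q)
    (hO : IsOpen O) (hA : A.Finite) (hirr : IsIrreducibleAbout X A)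
    (hdec : ∀ K ⊆ X, IsSubcontinuum K → (relInterior X K).Nonempty → ¬ IsIndecomposableSet K) :
    ∃ P' Q', IsDecomposition X (X ∩ O) P' Q' ∧ P' ⊆ P ∧ Q ⊆ Q' ∧ ¬ X ∩ O ⊆ P' ∪ Q := by
  have hOQ : P ∩ (O \ Q) = (X ∩ O) \ Q := by
    rw [← h.union_eq, ← inter_sdiff_assoc, union_inter_distrib_right, union_sdiff_distrib,
      sdiff_eq_empty.2 (inter_subset_left (s := Q)), union_empty]
  have hopen : IsOpen (O \ Q) := hO.sdiff h.right.1.isClosed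
  have hXOQ : (X ∩ (O \ Q)).Nonempty := by
    rw [← inter_sdiff_assoc]; exact sdiff_nonempty.2 h.not_subset_right
  obtain ⟨q, hqP, hqQ⟩ := h.inter_nonempty
  obtain ⟨Y, hYP, -, hBY, P', T, hY⟩ := h.left.exists_isDecomposition_of_finite hopen
    ((hA.inter_of_left P).insert q) (insert_subset hqP inter_subset_right) fun K hKP hK hOK =>
      hdec K (hKP.trans h.left_subset) hK
        (relInterior_nonempty_iff.2 ⟨_, hopen, hXOQ, by rwa [← inter_sdiff_assoc, ← hOQ]⟩)
  obtain ⟨hqY, hAY⟩ := insert_subset_iff.1 hBY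
  rw [hOQ] at hY
  wlog hqT : q ∈ T generalizing P' T
  · rw [← hY.union_eq] at hqY
    exact this T P' hY.symm (hqY.resolve_right hqT)
  have hnot {S : Set α} (hS : ¬ (X ∩ O) \ Q ⊆ S) : ¬ X ∩ O ⊆ S ∪ Q := by
    rwa [union_comm, ← sdiff_subset_iff]
  have hunion : P' ∪ (T ∪ Q) = X := by
    rw [← union_assoc, hY.union_eq]
    refine hirr.2 _ (hY.isSubcontinuum.union h.right ⟨q, hqY, hqQ⟩)
      (union_subset (hYP.trans h.left_subset) h.right_subset) fun a ha => ?_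
    exact (h.union_eq.ge (hirr.1 ha)).imp_left fun haP => hAY ⟨ha, haP⟩
  exact ⟨P', T ∪ Q, ⟨hY.left, hY.right.union h.right ⟨q, hqT, hqQ⟩, hunion,
    hY.inter_nonempty.mono (inter_subset_inter_right _ subset_union_left),
    fun hW => hY.not_subset_left (sdiff_subset.trans hW), hnot hY.not_subset_right⟩,
    hY.left_subset.trans hYP, subset_union_right, hnot hY.not_subset_left⟩

section Refinement

variable {X A W P Q P' Q' : Set α}

lemma IsIrreducibleAbout.subset_of_union_eq_inter (hirr : IsIrreducibleAbout X A)
    (h : IsDecomposition X W P Q) (h' : IsDecomposition X W P' Q') (hPP : P' ⊆ P) (hQQ : Q ⊆ Q')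
    (hA : A ⊆ P' ∪ Q) {E F : Set α} (hE : IsClosed E) (hF : IsClosed F) (hEF : Disjoint E F)
    (hunion : E ∪ F = P ∩ Q') (hne : E.Nonempty) : F ⊆ P' ∪ Q := by
  have hQ' : Q ∪ (E ∪ F) = Q' := by
    rw [hunion, union_inter_distrib_left, union_eq_self_of_subset_left hQQ, union_comm Q,
      h.union_eq, inter_eq_right.2 h'.right_subset]
  have hP : P' ∪ (E ∪ F) = P := by
    rw [hunion, union_inter_distrib_left, union_eq_self_of_subset_left hPP, h'.union_eq,
      inter_eq_left.2 h.left_subset]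
  have hEcompact : IsCompact E :=
    h.left.1.of_isClosed_subset hE (subset_union_left.trans (hunion.le.trans inter_subset_left))
  have attach {L : Set α} (hL : IsSubcontinuum L) (hLEF : IsPreconnected (L ∪ (E ∪ F))) :
      IsSubcontinuum (L ∪ E) :=
    ⟨hL.1.union hEcompact, hL.2.1.mono subset_union_left,
      isPreconnected_union_left_of_disjoint hL.1.isClosed hE hF hEF hL.2.2 hLEF⟩
  have hX : (P' ∪ E) ∪ (Q ∪ E) = X := by
    refine hirr.2 _ ((attach h'.left (hP ▸ h.left.2.2)).union
      (attach h.right (hQ' ▸ h'.right.2.2)) (hne.mono fun x hx => ⟨Or.inr hx, Or.inr hx⟩)) ?_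
      (hA.trans (union_subset_union subset_union_left subset_union_left))
    exact union_subset ((union_subset_union_right _ subset_union_left).trans
      (hP.trans_subset h.left_subset)) ((union_subset_union_right _ subset_union_left).trans
      (hQ'.trans_subset h'.right_subset))
  rw [← union_union_distrib_right] at hX
  have hFX : F ⊆ X := (subset_union_right.trans hunion.le).trans
    (inter_subset_left.trans h.left_subset)
  exact hEF.symm.subset_left_of_subset_union (hFX.trans hX.ge)

lemma IsIrreducibleAbout.isPreconnected_inter (hirr : IsIrreducibleAbout X A)
    (h : IsDecomposition X W P Q) (h' : IsDecomposition X W P' Q') (hPP : P' ⊆ P) (hQQ : Q ⊆ Q')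
    (hA : A ⊆ P' ∪ Q) (hne : P' ∪ Q ≠ X) : IsPreconnected (P ∩ Q') := by
  have hclosed : IsClosed (P ∩ Q') := h.left.1.isClosed.inter h'.right.1.isClosed
  refine (isPreconnected_iff_subset_of_fully_disjoint_closed hclosed).2 ?_
  intro u v hu hv huv hdisj
  by_contra! hnot
  have hunion : P ∩ Q' ∩ u ∪ P ∩ Q' ∩ v = P ∩ Q' := by
    rw [← inter_union_distrib_left, inter_eq_left.2 huv]
  have hEF := hdisj.mono (inter_subset_right (s := P ∩ Q')) (inter_subset_right (s := P ∩ Q'))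
  obtain ⟨x, hx, hxu⟩ := not_subset.1 hnot.1
  obtain ⟨y, hy, hyv⟩ := not_subset.1 hnot.2
  have hv' := hirr.subset_of_union_eq_inter h h' hPP hQQ hA (hclosed.inter hu) (hclosed.inter hv)
    hEF hunion ⟨y, hy, (huv hy).resolve_right hyv⟩
  have hu' := hirr.subset_of_union_eq_inter h h' hPP hQQ hA (hclosed.inter hv) (hclosed.inter hu)
    hEF.symm (union_comm _ _ ▸ hunion) ⟨x, hx, (huv hx).resolve_left hxu⟩
  refine hne (Subset.antisymm (union_subset h'.left_subset h.right_subset) ?_)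
  have hPQ : P ∩ Q' ⊆ P' ∪ Q := hunion ▸ union_subset hu' hv'
  intro z hz
  rcases h.union_eq.ge hz with hzP | hzQ
  · exact (h'.union_eq.ge hz).elim Or.inl fun hzQ' => hPQ ⟨hzP, hzQ'⟩
  · exact Or.inr hzQ

end Refinement

lemma IsIrreducibleAbout.exists_isClosed_cover {X A O : Set α} (hX : IsSubcontinuum X)
    (hO : IsOpen O) (hXO : (X ∩ O).Nonempty) (hA : A.Finite) (hirr : IsIrreducibleAbout X A)
    (hdec : ∀ K ⊆ X, IsSubcontinuum K → (relInterior X K).Nonempty → ¬ IsIndecomposableSet K) :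
    ∃ P Q, IsClosed P ∧ IsClosed Q ∧ P ∪ Q = X ∧ IsPreconnected (P ∩ Q) ∧
      ¬ X ∩ O ⊆ P ∧ ¬ X ∩ O ⊆ Q := by
  obtain ⟨Y, hYX, -, hAY, K₁, K₂, hY⟩ := hX.exists_isDecomposition_of_finite hO hA hirr.1
    fun K hKX hK hOK => hdec K hKX hK (relInterior_nonempty_iff.2 ⟨O, hO, hXO, hOK⟩)
  rw [hirr.2 Y hY.isSubcontinuum hYX hAY] at hY
  -- Maximality of `A ∩ Q` is what makes the next refinement `(P', Q')` satisfy `A ⊆ P' ∪ Q`.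
  obtain ⟨⟨P, Q⟩, h, hmax⟩ := Set.Finite.exists_maximalFor' (fun R : Set α × Set α => A ∩ R.2)
    {R | IsDecomposition X (X ∩ O) R.1 R.2} (hA.finite_subsets.subset <| by
      rintro _ ⟨R, -, rfl⟩
      exact inter_subset_left) ⟨(K₁, K₂), hY⟩
  obtain ⟨P', Q', h', hPP, hQQ, hPQ⟩ := IsDecomposition.exists_refinement h hO hA hirr hdec
  have hAQ : A ∩ Q' ⊆ A ∩ Q := hmax (j := (P', Q')) h' (inter_subset_inter_right _ hQQ)
  have hA' : A ⊆ P' ∪ Q := fun a ha => (h'.union_eq.ge (hirr.1 ha)).imp id fun haQ' =>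
    (hAQ ⟨ha, haQ'⟩).2
  refine ⟨P, Q', h.left.1.isClosed, h'.right.1.isClosed, ?_,
    hirr.isPreconnected_inter h h' hPP hQQ hA' ?_, h.not_subset_left, h'.not_subset_right⟩
  · exact (union_subset h.left_subset h'.right_subset).antisymm
      (h.union_eq.ge.trans (union_subset_union_right P hQQ))
  · rintro heq
    exact hPQ (inter_subset_left.trans heq.ge)

end Continua

section ContinuousLog

variable {α : Type*} [TopologicalSpace α] {f h : α → ℂ} {K L : Set α}

/-- `f` has a continuous logarithm on `K`, i.e. `f` lifts through `exp` over `K`. -/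
def HasContinuousLogOn (f : α → ℂ) (K : Set α) : Prop :=
  ∃ g : α → ℂ, ContinuousOn g K ∧ ∀ z ∈ K, Complex.exp (g z) = f z

-- The quotient `h / f` stays in the disc of radius `1` about `1`, where `log` is continuous.
lemma HasContinuousLogOn.of_norm_sub_lt (hf : HasContinuousLogOn f K) (hh : ContinuousOn h K)
    (hfh : ∀ z ∈ K, ‖h z - f z‖ < ‖f z‖) : HasContinuousLogOn h K := by
  obtain ⟨g, hg, hexp⟩ := hf
  have hf₀ (z) (hz : z ∈ K) : f z ≠ 0 := norm_pos_iff.1 ((norm_nonneg _).trans_lt (hfh z hz))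
  have hslit (z) (hz : z ∈ K) : h z / f z ∈ Complex.slitPlane := by
    have heq : h z / f z = 1 + (h z - f z) / f z := by
      rw [sub_div, div_self (hf₀ z hz), add_sub_cancel]
    rw [heq]
    refine Complex.mem_slitPlane_of_norm_lt_one ?_
    rw [norm_div]
    exact (div_lt_one (norm_pos_iff.2 (hf₀ z hz))).2 (hfh z hz)
  have hfc : ContinuousOn f K := (Complex.continuous_exp.comp_continuousOn hg).congr
    fun z hz => (hexp z hz).symm
  refine ⟨fun z => g z + Complex.log (h z / f z), hg.add ((hh.div hfc hf₀).clog hslit), ?_⟩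
  intro z hz
  rw [Complex.exp_add, hexp z hz, Complex.exp_log (Complex.slitPlane_ne_zero (hslit z hz)),
    mul_div_cancel₀ _ (hf₀ z hz)]

lemma eqOn_of_exp_eqOn (hK : IsPreconnected K) {g₁ g₂ : α → ℂ} (hg₁ : ContinuousOn g₁ K)
    (hg₂ : ContinuousOn g₂ K) (hexp : ∀ z ∈ K, Complex.exp (g₁ z) = Complex.exp (g₂ z)) {w : α}
    (hw : w ∈ K) (heq : g₁ w = g₂ w) : EqOn g₁ g₂ K :=
  Complex.isCoveringMap_exp.eqOn_of_comp_eqOn hK hg₁ hg₂ (fun z hz => Subtype.ext (hexp z hz)) hw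
    heq

lemma HasContinuousLogOn.union (hK : IsClosed K) (hL : IsClosed L) (hKL : IsPreconnected (K ∩ L))
    (hfK : HasContinuousLogOn f K) (hfL : HasContinuousLogOn f L) :
    HasContinuousLogOn f (K ∪ L) := by
  classical
  obtain ⟨g₁, hg₁, hexp₁⟩ := hfK
  obtain ⟨g₂, hg₂, hexp₂, heq⟩ : ∃ g₂, ContinuousOn g₂ L ∧ (∀ z ∈ L, Complex.exp (g₂ z) = f z) ∧
      EqOn g₁ g₂ (K ∩ L) := by
    obtain ⟨g, hg, hexp⟩ := hfL
    rcases (K ∩ L).eq_empty_or_nonempty with hempty | ⟨w, hwK, hwL⟩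
    · exact ⟨g, hg, hexp, hempty ▸ eqOn_empty _ _⟩
    have hexp' (z) (hz : z ∈ L) : Complex.exp (g z + (g₁ w - g w)) = f z := by
      rw [Complex.exp_add, Complex.exp_sub, hexp z hz, hexp₁ w hwK, hexp w hwL,
        div_self ((hexp w hwL).symm ▸ Complex.exp_ne_zero _), mul_one]
    have hg' : ContinuousOn (fun z => g z + (g₁ w - g w)) L := hg.add continuousOn_const
    exact ⟨_, hg', hexp', eqOn_of_exp_eqOn hKL (hg₁.mono inter_subset_left)
      (hg'.mono inter_subset_right) (fun z hz => (hexp₁ z hz.1).trans (hexp' z hz.2).symm)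
      ⟨hwK, hwL⟩ (add_sub_cancel _ _).symm⟩
  have hK' : EqOn (K.piecewise g₁ g₂) g₁ K := piecewise_eqOn K g₁ g₂
  have hL' : EqOn (K.piecewise g₁ g₂) g₂ L := fun z hz => by
    by_cases hzK : z ∈ K
    · exact (hK' hzK).trans (heq ⟨hzK, hz⟩)
    · exact piecewise_eq_of_notMem _ _ _ hzK
  refine ⟨K.piecewise g₁ g₂, (hg₁.congr hK').union_of_isClosed (hg₂.congr hL') hK hL, ?_⟩
  rintro z (hz | hz)
  · rw [hK' hz, hexp₁ z hz]
  · rw [hL' hz, hexp₂ z hz]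

-- Tietze's theorem, applied to the logarithm of `f` on `K`.
lemma HasContinuousLogOn.exists_continuous_ne_zero [NormalSpace α] {O : Set α} (hf : Continuous f)
    (hlog : HasContinuousLogOn f K) (hK : IsClosed K) (hOK : frontier O ⊆ K)
    (hf₀ : ∀ z ∉ O, f z ≠ 0) : ∃ F : α → ℂ, Continuous F ∧ (∀ z, F z ≠ 0) ∧ EqOn F f Oᶜ := by
  classical
  obtain ⟨g, hg, hexp⟩ := hlog
  obtain ⟨G, hG⟩ := ContinuousMap.exists_restrict_eq hK
    (⟨K.domRestrict g, continuousOn_iff_continuous_domRestrict.1 hg⟩ : C(K, ℂ))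
  have hGf (z) (hz : z ∈ K) : Complex.exp (G z) = f z :=
    (congrArg Complex.exp (DFunLike.congr_fun hG ⟨z, hz⟩)).trans (hexp z hz)
  refine ⟨O.piecewise (fun z => Complex.exp (G z)) f,
    Continuous.piecewise (fun z hz => hGf z (hOK hz)) (by fun_prop) hf, fun z => ?_,
    piecewise_eqOn_compl _ _ _⟩
  by_cases hz : z ∈ O
  · rw [piecewise_eq_of_mem _ _ _ hz]
    exact Complex.exp_ne_zero _
  · rw [piecewise_eq_of_notMem _ _ _ hz]
    exact hf₀ z hz

end ContinuousLog

lemma hasContinuousLogOn_univ {F : ℂ → ℂ} (hF : Continuous F) (hF₀ : ∀ z, F z ≠ 0) :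
    HasContinuousLogOn F univ := by
  have : ContractibleSpace (univ : Set ℂ) := convex_univ.contractibleSpace univ_nonempty
  have huniv : IsSimplyConnected (univ : Set ℂ) :=
    (inferInstance : SimplyConnectedSpace (univ : Set ℂ))
  obtain ⟨g, hg, hexp⟩ := Complex.exists_continuousOn_eqOn_exp_comp huniv isOpen_univ
    hF.continuousOn fun ⟨z, _, hz⟩ => hF₀ z hz
  exact ⟨g, hg, hexp⟩

-- Along the circle a logarithm would be `θ ↦ θ * I` up to a constant, which is not periodic.
lemma not_hasContinuousLogOn_sphere (u : ℂ) {r : ℝ} (hr : 0 ≤ r) :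
    ¬ HasContinuousLogOn (fun z => z - u) (Metric.sphere u r) := by
  rintro ⟨g, hg, hexp⟩
  have hexp' (θ : ℝ) : Complex.exp (g (circleMap u r θ)) = r * Complex.exp (θ * Complex.I) := by
    exact (hexp _ (circleMap_mem_sphere u hr θ)).trans (by simp [circleMap])
  have hlift := eqOn_of_exp_eqOn isPreconnected_univ (g₁ := fun θ : ℝ => g (circleMap u r θ))
    (g₂ := fun θ : ℝ => g (circleMap u r 0) + θ * Complex.I)
    (hg.comp (continuous_circleMap u r).continuousOn fun θ _ => circleMap_mem_sphere u hr θ)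
    (by fun_prop) (fun θ _ => by simp [Complex.exp_add, hexp']) (mem_univ 0) (by simp)
  have hperiod := hlift (mem_univ (2 * Real.pi))
  have := periodic_circleMap u r 0
  rw [zero_add] at this
  simp [this, Real.pi_ne_zero] at hperiod

lemma not_hasContinuousLogOn_of_frontier_subset {K O : Set ℂ} (hK : IsClosed K)
    (hO : Bornology.IsBounded O) (hOK : frontier O ⊆ K) {u : ℂ} (hu : u ∈ O) :
    ¬ HasContinuousLogOn (fun z => z - u) K := by
  intro hlog
  obtain ⟨F, hF, hF₀, hFO⟩ := hlog.exists_continuous_ne_zero (continuous_sub_right u) hK hOK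
    fun z hz => sub_ne_zero.2 (ne_of_mem_of_not_mem hu hz).symm
  obtain ⟨r, hr, hOr⟩ := hO.subset_ball_lt 0 u
  refine not_hasContinuousLogOn_sphere u hr.le ?_
  obtain ⟨g, hg, hexp⟩ := hasContinuousLogOn_univ hF hF₀
  exact ⟨g, hg.mono (subset_univ _), fun z hz => (hexp z (mem_univ z)).trans
    (hFO fun hzO => (Metric.mem_ball.1 (hOr hzO)).ne hz)⟩

section Plane

open Filter OnePoint

variable {K : Set ℂ}

lemma eventually_hasContinuousLogOn_sub_iff (hK : IsClosed K) {p : ℂ} (hp : p ∉ K) :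
    ∀ᶠ q in 𝓝 p, HasContinuousLogOn (fun z => z - q) K ↔ HasContinuousLogOn (fun z => z - p) K := by
  obtain ⟨ε, hε, hball⟩ := Metric.isOpen_iff.1 hK.isOpen_compl p hp
  filter_upwards [Metric.ball_mem_nhds p (half_pos hε)] with q hq
  rw [Metric.mem_ball, dist_eq_norm_sub] at hq
  have hε_le (z) (hz : z ∈ K) : ε ≤ ‖z - p‖ := by
    rw [← dist_eq_norm_sub]
    exact not_lt.1 fun hlt => hball hlt hz
  constructor <;> refine fun hlog => hlog.of_norm_sub_lt (by fun_prop) fun z hz => ?_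
  · rw [sub_sub_sub_cancel_left]
    linarith [hε_le z hz, norm_sub_le_norm_sub_add_norm_sub z q p]
  · rw [sub_sub_sub_cancel_left, norm_sub_rev]
    linarith [hε_le z hz]

-- For `p` far from `K`, the function `z ↦ z - p` is close to the constant `-p`.
lemma eventually_cocompact_hasContinuousLogOn_sub (hK : IsCompact K) :
    ∀ᶠ p in cocompact ℂ, HasContinuousLogOn (fun z => z - p) K := by
  obtain ⟨R, hR, hKR⟩ := hK.isBounded.exists_pos_norm_le
  filter_upwards [tendsto_norm_cocompact_atTop.eventually_gt_atTop R] with p hp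
  have hconst : HasContinuousLogOn (fun _ => -p) K :=
    ⟨fun _ => Complex.log (-p), continuousOn_const, fun _ _ =>
      Complex.exp_log (neg_ne_zero.2 (norm_pos_iff.1 (hR.trans hp)))⟩
  refine hconst.of_norm_sub_lt (by fun_prop) fun z hz => ?_
  rw [sub_neg_eq_add, sub_add_cancel, norm_neg]
  exact (hKR z hz).trans_lt hp

lemma hasContinuousLogOn_sub_of_mem_connectedComponentIn (hK : IsCompact K) {u : ℂ}
    (hu : (u : OnePoint ℂ) ∈ connectedComponentIn ((↑) '' K)ᶜ ∞) :
    HasContinuousLogOn (fun z => z - u) K := by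
  set C : Set (OnePoint ℂ) := connectedComponentIn ((↑) '' K)ᶜ ∞
  -- The property is extended to `∞`, where it holds trivially.
  let HasLog (x : OnePoint ℂ) : Prop := ∀ p : ℂ, (p : OnePoint ℂ) = x →
    HasContinuousLogOn (fun z => z - p) K
  have hcoe (p : ℂ) : HasLog p ↔ HasContinuousLogOn (fun z => z - p) K :=
    ⟨fun h => h p rfl, fun h q hq => coe_injective hq ▸ h⟩
  have hinfty : HasLog ∞ := fun p hp => (coe_ne_infty p hp).elim
  have hlocal (x) (hx : x ∈ C) : ∀ᶠ y in 𝓝 x, HasLog y ↔ HasLog x := by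
    induction x with
    | infty =>
      simp only [nhds_infty_eq, eventually_sup, eventually_map, eventually_pure, iff_true, hinfty,
        and_true, hcoe, coclosedCompact_eq_cocompact]
      exact eventually_cocompact_hasContinuousLogOn_sub hK
    | coe p =>
      simp only [nhds_coe_eq, eventually_map, hcoe]
      exact eventually_hasContinuousLogOn_sub_iff hK.isClosed fun hpK =>
        connectedComponentIn_subset _ _ hx (mem_image_of_mem _ hpK)
  refine (hcoe u).1 (isPreconnected_connectedComponentIn.induction₂'
    (fun x y => HasLog x → HasLog y) (fun x hx => ?_) (fun _ _ _ _ _ _ hxy hyz => hyz ∘ hxy)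
    (mem_connectedComponentIn infty_notMem_image_coe) hu hinfty)
  exact eventually_nhdsWithin_of_eventually_nhds ((hlocal x hx).mono fun _ hy => ⟨hy.2, hy.1⟩)

lemma frontier_connectedComponentIn_subset {α : Type*} [TopologicalSpace α]
    [LocallyConnectedSpace α] {F : Set α} (hF : IsOpen F) (x : α) :
    frontier (connectedComponentIn F x) ⊆ Fᶜ := by
  intro y hy hyF
  obtain ⟨z, hzy, hzx⟩ := mem_closure_iff.1 (frontier_subset_closure hy) _
    hF.connectedComponentIn (mem_connectedComponentIn hyF)
  have hyx : y ∈ connectedComponentIn F x :=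
    connectedComponentIn_eq hzx ▸ connectedComponentIn_eq hzy ▸ mem_connectedComponentIn hyF
  exact hy.2 (hF.connectedComponentIn.interior_eq.symm ▸ hyx)

-- A component of `Kᶜ` avoiding `∞` is bounded, and over its frontier `z ↦ z - u` has no logarithm.
lemma mem_connectedComponentIn_of_hasContinuousLogOn_sub (hK : IsClosed K) {u : ℂ} (hu : u ∉ K)
    (hlog : HasContinuousLogOn (fun z => z - u) K) :
    (u : OnePoint ℂ) ∈ connectedComponentIn ((↑) '' K)ᶜ ∞ := by
  set O := connectedComponentIn Kᶜ u
  have huO : u ∈ O := mem_connectedComponentIn hu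
  have hOK : frontier O ⊆ K :=
    (frontier_connectedComponentIn_subset hK.isOpen_compl u).trans (compl_compl K).subset
  have hinfty : ∞ ∈ closure ((↑) '' O : Set (OnePoint ℂ)) := by
    by_contra hmem
    have hbdd : Bornology.IsBounded O :=
      ((isClosed_iff_of_notMem hmem).1 isClosed_closure).2.isBounded.subset fun z hz =>
        subset_closure (mem_image_of_mem _ hz)
    exact not_hasContinuousLogOn_of_frontier_subset hK hbdd hOK huO hlog
  have hconn : IsPreconnected (insert ∞ ((↑) '' O : Set (OnePoint ℂ))) :=
    (isPreconnected_connectedComponentIn.image _ continuous_coe.continuousOn).subset_closure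
      (subset_insert _ _) (insert_subset hinfty subset_closure)
  refine hconn.subset_connectedComponentIn (mem_insert _ _) ?_ (mem_insert_of_mem _ ⟨u, huO, rfl⟩)
  rintro _ (rfl | ⟨z, hz, rfl⟩)
  · exact infty_notMem_image_coe
  · rintro ⟨w, hw, hwz⟩
    exact connectedComponentIn_subset _ _ hz (coe_injective hwz ▸ hw)

lemma exists_isCompact_image_coe_eq {α : Type*} [TopologicalSpace α] {P : Set (OnePoint α)}
    (hP : IsClosed P) (hinfty : ∞ ∉ P) : ∃ K : Set α, IsCompact K ∧ (↑) '' K = P :=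
  ⟨_, ((isClosed_iff_of_notMem hinfty).1 hP).2, image_preimage_eq_of_subset fun _ hx =>
    ne_infty_iff_exists.1 (ne_of_mem_of_not_mem hx hinfty)⟩

lemma mem_connectedComponentIn_compl_union_infty {P Q : Set (OnePoint ℂ)} (hP : IsClosed P)
    (hQ : IsClosed Q) (hPQ : IsPreconnected (P ∩ Q)) {u : OnePoint ℂ}
    (huP : u ∈ connectedComponentIn Pᶜ ∞) (huQ : u ∈ connectedComponentIn Qᶜ ∞) :
    u ∈ connectedComponentIn (P ∪ Q)ᶜ ∞ := by
  obtain ⟨K, hK, rfl⟩ := exists_isCompact_image_coe_eq hP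
    (connectedComponentIn_nonempty_iff.1 ⟨u, huP⟩)
  obtain ⟨L, hL, rfl⟩ := exists_isCompact_image_coe_eq hQ
    (connectedComponentIn_nonempty_iff.1 ⟨u, huQ⟩)
  rw [← image_union]
  rw [← image_inter coe_injective, isOpenEmbedding_coe.isInducing.isPreconnected_image] at hPQ
  induction u with
  | infty => exact mem_connectedComponentIn infty_notMem_image_coe
  | coe u =>
    refine mem_connectedComponentIn_of_hasContinuousLogOn_sub (hK.union hL).isClosed ?_
      (.union hK.isClosed hL.isClosed hPQ
        (hasContinuousLogOn_sub_of_mem_connectedComponentIn hK huP)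
        (hasContinuousLogOn_sub_of_mem_connectedComponentIn hL huQ))
    rintro (huK | huL)
    · exact connectedComponentIn_subset _ _ huP ⟨u, huK, rfl⟩
    · exact connectedComponentIn_subset _ _ huQ ⟨u, huL, rfl⟩

-- The reflection in the hyperplane orthogonal to `x - y` exchanges `x` and `y`.
lemma exists_homeomorph_sphere_apply_eq {E : Type*} [NormedAddCommGroup E] [InnerProductSpace ℝ E]
    {r : ℝ} (x y : Metric.sphere (0 : E) r) :
    ∃ e : Metric.sphere (0 : E) r ≃ₜ Metric.sphere (0 : E) r, e x = y := by
  let ρ := (ℝ ∙ ((x : E) - y))ᗮ.reflection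
  refine ⟨ρ.toHomeomorph.subtype fun z => ?_, Subtype.ext (Submodule.reflection_sub ?_)⟩
  · simp
  · simp

lemma exists_homeomorph_onePoint_apply_eq {E : Type*} [AddCommGroup E] [Module ℝ E]
    [FiniteDimensional ℝ E] [TopologicalSpace E] [IsTopologicalAddGroup E] [ContinuousSMul ℝ E]
    [T2Space E] (x y : OnePoint E) : ∃ e : OnePoint E ≃ₜ OnePoint E, e x = y := by
  let φ := onePointEquivSphereOfFinrankEq (V := E) (Fintype.card_fin (Module.finrank ℝ E + 1)).symm
  obtain ⟨e, he⟩ := exists_homeomorph_sphere_apply_eq (φ x) (φ y)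
  exact ⟨(φ.trans e).trans φ.symm, by simp [he]⟩

-- Janiszewski's theorem.
lemma mem_connectedComponentIn_compl_union {P Q : Set (OnePoint ℂ)} (hP : IsClosed P)
    (hQ : IsClosed Q) (hPQ : IsPreconnected (P ∩ Q)) {u v : OnePoint ℂ}
    (huP : v ∈ connectedComponentIn Pᶜ u) (huQ : v ∈ connectedComponentIn Qᶜ u) :
    v ∈ connectedComponentIn (P ∪ Q)ᶜ u := by
  obtain ⟨e, he⟩ := exists_homeomorph_onePoint_apply_eq u ∞
  have himage {S : Set (OnePoint ℂ)} (hu : u ∈ Sᶜ) :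
      e v ∈ connectedComponentIn (e '' S)ᶜ ∞ ↔ v ∈ connectedComponentIn Sᶜ u := by
    rw [← he, ← image_compl_eq e.bijective, ← e.image_connectedComponentIn hu,
      e.injective.mem_set_image]
  have huP' : u ∈ Pᶜ := connectedComponentIn_nonempty_iff.1 ⟨v, huP⟩
  have huQ' : u ∈ Qᶜ := connectedComponentIn_nonempty_iff.1 ⟨v, huQ⟩
  rw [← himage huP'] at huP
  rw [← himage huQ'] at huQ
  rw [← himage (compl_union P Q ▸ ⟨huP', huQ'⟩), image_union]
  exact mem_connectedComponentIn_compl_union_infty (e.isClosed_image.2 hP) (e.isClosed_image.2 hQ)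
    (image_inter e.injective ▸ hPQ.image e e.continuous.continuousOn) huP huQ

end Plane

lemma relInterior_inter_self {α : Type*} [TopologicalSpace α] (X Z : Set α) :
    relInterior X (X ∩ Z) = relInterior X Z := by
  rw [relInterior, relInterior, Subtype.preimage_coe_self_inter]

lemma exists_eq_connectedComponentIn_compl_frontier {α : Type*} [TopologicalSpace α] {U : Set α}
    (hU : IsOpen U) (hU' : IsConnected U) :
    ∃ x ∈ (frontier U)ᶜ, U = connectedComponentIn (frontier U)ᶜ x := by
  obtain ⟨x, hx⟩ := hU'.nonempty
  have hUF : U ⊆ (frontier U)ᶜ := (disjoint_frontier_iff_isOpen.2 hU).symm.subset_compl_right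
  have hcover : connectedComponentIn (frontier U)ᶜ x ⊆ U ∪ (closure U)ᶜ := fun y hy => by
    by_contra hyU
    rw [mem_union, mem_compl_iff, not_or, not_not] at hyU
    exact connectedComponentIn_subset _ _ hy (hU.frontier_eq ▸ ⟨hyU.2, hyU.1⟩)
  refine ⟨x, hUF hx, (hU'.isPreconnected.subset_connectedComponentIn hx hUF).antisymm ?_⟩
  exact isPreconnected_connectedComponentIn.subset_left_of_subset_union hU
    isClosed_closure.isOpen_compl (disjoint_compl_right.mono_left subset_closure) hcover
    ⟨x, mem_connectedComponentIn (hUF hx), hx⟩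

lemma mem_connectedComponentIn_of_mem_closure {α : Type*} [TopologicalSpace α] {S T F : Set α}
    (hS : IsPreconnected S) (hT : IsPreconnected T) (hSF : S ⊆ F) (hTF : T ⊆ F) {u v w : α}
    (hu : u ∈ S) (hv : v ∈ T) (hwS : w ∈ closure S) (hwT : w ∈ closure T) (hw : w ∈ F) :
    v ∈ connectedComponentIn F u := by
  have hS' := hS.subset_closure (subset_insert w S) (insert_subset hwS subset_closure)
  have hT' := hT.subset_closure (subset_insert w T) (insert_subset hwT subset_closure)
  exact (hS'.union w (mem_insert w S) (mem_insert w T) hT').subset_connectedComponentIn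
    (Or.inl (mem_insert_of_mem w hu)) (union_subset (insert_subset hw hSF) (insert_subset hw hTF))
    (Or.inr (mem_insert_of_mem w hv))

theorem stmt_9_general {X U V : Set RiemannSphere} (hX : IsSubcontinuum X)
    (hU : ∃ x ∈ Xᶜ, U = connectedComponentIn Xᶜ x) (hV : ∃ x ∈ Xᶜ, V = connectedComponentIn Xᶜ x)
    (hVU : V ≠ U) (hint : (relInterior X (frontier U ∩ frontier V)).Nonempty)
    (hirr : ∃ A, A.Finite ∧ IsIrreducibleAbout X A)
    (hbig : ∀ K ⊆ X, IsSubcontinuum K → IsIndecomposableSet K → (relInterior X K).Nonempty →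
      K = X) : IsIndecomposableSet X := by
  by_contra hdec
  obtain ⟨u, hu, rfl⟩ := hU
  obtain ⟨v, hv, rfl⟩ := hV
  obtain ⟨A, hA, hirr⟩ := hirr
  obtain ⟨O, hO, hXO, hOUV⟩ := relInterior_nonempty_iff.1 hint
  obtain ⟨P, Q, hP, hQ, rfl, hPQ, hOP, hOQ⟩ := hirr.exists_isClosed_cover hX hO hXO hA
    fun K hKX hK hKint hKind => hdec (hbig K hKX hK hKind hKint ▸ hKind)
  have join {S} (hS : S ⊆ P ∪ Q) (hOS : ¬ (P ∪ Q) ∩ O ⊆ S) : v ∈ connectedComponentIn Sᶜ u := by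
    obtain ⟨w, hwO, hwS⟩ := not_subset.1 hOS
    have hS' (x) : connectedComponentIn (P ∪ Q)ᶜ x ⊆ Sᶜ :=
      (connectedComponentIn_subset _ x).trans (compl_subset_compl.2 hS)
    exact mem_connectedComponentIn_of_mem_closure isPreconnected_connectedComponentIn
      isPreconnected_connectedComponentIn (hS' u) (hS' v) (mem_connectedComponentIn hu)
      (mem_connectedComponentIn hv) (frontier_subset_closure (hOUV hwO).1)
      (frontier_subset_closure (hOUV hwO).2) hwS
  exact hVU (connectedComponentIn_eq (mem_connectedComponentIn_compl_union hP hQ hPQ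
    (join subset_union_left hOP) (join subset_union_right hOQ))).symm

/-- Let `U ⊆ ℂ∞` be a simply connected open set whose boundary
`X = ∂U` has at least two points and is connected, and let `V ≠ U` be a connected
component of `ℂ∞ \ X` such that `∂V` has nonempty interior relative to `X`.  Assume
`X` is irreducible about some finite subset of `X`, and that every indecomposable
subcontinuum of `X` with nonempty interior relative to `X` equals `X`.  Then `X` is an
indecomposable continuum. -/
theorem stmt_9 (U V : Set RiemannSphere) (hUopen : IsOpen U)
    (hUsc : SimplyConnectedSpace U) (hbd : (frontier U).Nontrivial)
    (hXconn : IsConnected (frontier U))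
    (hV : ∃ x ∈ (frontier U)ᶜ, V = connectedComponentIn (frontier U)ᶜ x)
    (hVU : V ≠ U)
    (hint : (relInterior (frontier U) (frontier V)).Nonempty)
    (hirr : ∃ A : Set RiemannSphere, A.Finite ∧ A ⊆ frontier U ∧
      ∀ K : Set RiemannSphere, IsSubcontinuum K → K ⊆ frontier U → A ⊆ K →
        K = frontier U)
    (hbig : ∀ K : Set RiemannSphere, K ⊆ frontier U → IsSubcontinuum K →
      IsIndecomposableSet K → (relInterior (frontier U) K).Nonempty →
      K = frontier U) :
    IsSubcontinuum (frontier U) ∧ IsIndecomposableSet (frontier U) := by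
  have hX : IsSubcontinuum (frontier U) := ⟨isClosed_frontier.isCompact, hXconn⟩
  have hU : IsConnected U := isConnected_iff_connectedSpace.2 inferInstance
  exact ⟨hX, stmt_9_general hX (exists_eq_connectedComponentIn_compl_frontier hUopen hU) hV hVU
    (by rwa [relInterior_inter_self]) hirr hbig⟩
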